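/- arXiv:2103.11018 — 4 statements merged into one kernel-verified Lean document; each statement's English description precedes it below -/
import Mathlib

section
/- For every integer n ≥ 3, the number a(n) of permutations ρ of {0,1,…,n−1} satisfying ρ(0)=0, ρ(1)=2, ρ(i)≠i for all 1≤i≤n−1, and ρ(i)≤i+1 for all 1≤i≤n−1 equals F(n−2), the (n−2)nd Fibonacci number (with F(1)=F(2)=1). -/
/-!
Split off the value `ρ 0` of a permutation `ρ` of `{0, …, n}` with `ρ i ≤ i + 1`. Since `ρ 0 ≤ 1`,
either `0` is fixed and `ρ` is a permutation of the same kind on `{1, …, n}`, or `ρ 0 = 1` and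
removing `0` from its cycle leaves a permutation of the same kind in which the first point is newly
allowed to be fixed (it is when `ρ` swaps `0` and `1`). So let `d n` and `e n` count these
permutations on `n` points with no fixed point, respectively with at most the first point fixed:
`d (n + 2) = e (n + 1)` and `e (n + 2) = d (n + 1) + e (n + 1)`. Finally `a (n + 2) = d (n + 1)`,
because for `ρ 0 = 0` the condition `ρ 1 = 2` follows from `0 ≠ ρ 1 ≠ 1` and `ρ 1 ≤ 2`.
-/

/-- The set `A(n)` of permutations `ρ` of `{0,1,…,n−1}` with `ρ(0)=0`, `ρ(1)=2`,
and `ρ(i)≠i`, `ρ(i)≤i+1` for all `i` with `1 ≤ i ≤ n−1`. -/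
def molsA (n : ℕ) : Finset (Equiv.Perm (Fin n)) :=
  Finset.univ.filter fun ρ =>
    (∀ i : Fin n, (i : ℕ) = 0 → (ρ i : ℕ) = 0) ∧
    (∀ i : Fin n, (i : ℕ) = 1 → (ρ i : ℕ) = 2) ∧
    (∀ i : Fin n, 1 ≤ (i : ℕ) → (ρ i : ℕ) ≠ (i : ℕ) ∧ (ρ i : ℕ) ≤ (i : ℕ) + 1)

/-- `a(n)`, the number of such permutations. -/
def molsa (n : ℕ) : ℕ := (molsA n).card

open Equiv Function

variable {n : ℕ}

theorem fin_succ_preimage_singleton_zero : Fin.succ ⁻¹' {(0 : Fin (n + 1))} = ∅ :=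
  Set.preimage_singleton_eq_empty.2 fun ⟨i, hi⟩ => Fin.succ_ne_zero i hi

theorem fixedPoints_decomposeFin_symm_zero (e : Perm (Fin n)) :
    fixedPoints (Perm.decomposeFin.symm (0, e)) = insert 0 (Fin.succ '' fixedPoints e) := by
  ext i
  cases i using Fin.cases <;> simp [IsFixedPt]

theorem fixedPoints_decomposeFin_symm_succ (q : Fin n) (e : Perm (Fin n)) :
    fixedPoints (Perm.decomposeFin.symm (q.succ, e)) = Fin.succ '' (fixedPoints e \ {q}) := by
  ext i
  cases i using Fin.cases with
  | zero => simp [IsFixedPt]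
  | succ i =>
    by_cases hq : e i = q
    · simp [IsFixedPt, hq, eq_comm]
    · have hswap : swap 0 q.succ (e i).succ = (e i).succ :=
        swap_apply_of_ne_of_ne (Fin.succ_ne_zero _) ((Fin.succ_injective _).ne hq)
      simp only [mem_fixedPoints, IsFixedPt, Perm.decomposeFin_symm_apply_succ, hswap,
        Set.mem_image, Set.mem_sdiff, Set.mem_singleton_iff, Fin.succ_inj, exists_eq_right]
      exact ⟨fun hi => ⟨hi, hi ▸ hq⟩, And.left⟩

theorem ncard_eq_sum_ncard_decomposeFin_symm (s : Set (Perm (Fin (n + 1)))) :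
    s.ncard = ∑ p, {e | Perm.decomposeFin.symm (p, e) ∈ s}.ncard :=
  calc Nat.card {ρ // ρ ∈ s}
      = Nat.card {x : Fin (n + 1) × Perm (Fin n) // Perm.decomposeFin.symm (x.1, x.2) ∈ s} :=
        Nat.card_congr (Perm.decomposeFin.symm.subtypeEquivOfSubtype).symm
    _ = Nat.card (Σ p, {e // Perm.decomposeFin.symm (p, e) ∈ s}) :=
        Nat.card_congr (subtypeProdEquivSigmaSubtype fun p e => Perm.decomposeFin.symm (p, e) ∈ s)
    _ = ∑ p, {e | Perm.decomposeFin.symm (p, e) ∈ s}.ncard := Nat.card_sigma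

/-- The permutations whose matrix, with ones at the entries `(i, ρ i)`, is lower Hessenberg: all
entries above the first superdiagonal vanish. -/
def IsHessenberg (ρ : Perm (Fin n)) : Prop :=
  ∀ i, (ρ i : ℕ) ≤ i + 1

/-- The Hessenberg permutations all of whose fixed points lie in `S`. The set `S` is a parameter
because splitting off the value at `0` changes the set of admissible fixed points. -/
def hessenbergPerms (S : Set (Fin n)) : Set (Perm (Fin n)) :=
  {ρ | IsHessenberg ρ ∧ fixedPoints ρ ⊆ S}

theorem isHessenberg_decomposeFin_symm {p : Fin (n + 1)} {e : Perm (Fin n)} :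
    IsHessenberg (Perm.decomposeFin.symm (p, e)) ↔ (p : ℕ) ≤ 1 ∧ IsHessenberg e := by
  have swap_le_iff (hp : (p : ℕ) ≤ 1) (i : Fin n) :
      (swap 0 p (e i).succ : ℕ) ≤ i.succ + 1 ↔ (e i : ℕ) ≤ i + 1 := by
    rw [swap_apply_def, if_neg (Fin.succ_ne_zero _)]
    split_ifs with heq
    · rw [← heq, Fin.val_succ] at hp
      simp only [Fin.val_zero, zero_le, true_iff]
      omega
    · rw [Fin.val_succ, Fin.val_succ, Nat.add_le_add_iff_right]
  simp only [IsHessenberg, Fin.forall_fin_succ, Perm.decomposeFin_symm_apply_zero,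
    Perm.decomposeFin_symm_apply_succ, Fin.val_zero, zero_add]
  exact and_congr_right fun hp => forall_congr' (swap_le_iff hp)

theorem decomposeFin_symm_zero_mem_hessenbergPerms {S : Set (Fin (n + 1))} {e : Perm (Fin n)} :
    Perm.decomposeFin.symm (0, e) ∈ hessenbergPerms S ↔
      0 ∈ S ∧ e ∈ hessenbergPerms (Fin.succ ⁻¹' S) := by
  simp only [hessenbergPerms, Set.mem_ofPred_eq, isHessenberg_decomposeFin_symm, Fin.val_zero,
    zero_le, true_and, fixedPoints_decomposeFin_symm_zero, Set.insert_subset_iff,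
    Set.image_subset_iff]
  exact and_left_comm

theorem decomposeFin_symm_succ_mem_hessenbergPerms {S : Set (Fin (n + 2))} {q : Fin (n + 1)}
    {e : Perm (Fin (n + 1))} :
    Perm.decomposeFin.symm (q.succ, e) ∈ hessenbergPerms S ↔
      q = 0 ∧ e ∈ hessenbergPerms (insert 0 (Fin.succ ⁻¹' S)) := by
  have val_succ_le_one : (q.succ : ℕ) ≤ 1 ↔ q = 0 := by
    rw [Fin.val_succ, Fin.ext_iff, Fin.val_zero, Nat.succ_le_iff, Nat.lt_one_iff]
  simp only [hessenbergPerms, Set.mem_ofPred_eq, isHessenberg_decomposeFin_symm, val_succ_le_one,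
    fixedPoints_decomposeFin_symm_succ, Set.image_subset_iff, Set.sdiff_singleton_subset_iff,
    and_assoc]
  exact and_congr_right fun hq => by rw [hq]

theorem ncard_hessenbergPerms_add_two (S : Set (Fin (n + 2))) :
    (hessenbergPerms S).ncard =
      {e | 0 ∈ S ∧ e ∈ hessenbergPerms (Fin.succ ⁻¹' S)}.ncard +
        (hessenbergPerms (insert 0 (Fin.succ ⁻¹' S))).ncard := by
  simp [ncard_eq_sum_ncard_decomposeFin_symm (hessenbergPerms S), Fin.sum_univ_succ,
    decomposeFin_symm_zero_mem_hessenbergPerms, decomposeFin_symm_succ_mem_hessenbergPerms]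

theorem ncard_hessenbergPerms_of_zero_mem {S : Set (Fin (n + 2))} (hS : 0 ∈ S) :
    (hessenbergPerms S).ncard =
      (hessenbergPerms (Fin.succ ⁻¹' S)).ncard +
        (hessenbergPerms (insert 0 (Fin.succ ⁻¹' S))).ncard := by
  simp [ncard_hessenbergPerms_add_two S, hS]

theorem ncard_hessenbergPerms_of_zero_notMem {S : Set (Fin (n + 2))} (hS : 0 ∉ S) :
    (hessenbergPerms S).ncard = (hessenbergPerms (insert 0 (Fin.succ ⁻¹' S))).ncard := by
  simp [ncard_hessenbergPerms_add_two S, hS]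

theorem ncard_hessenbergPerms_eq_fib (n : ℕ) :
    (hessenbergPerms (∅ : Set (Fin (n + 1)))).ncard = Nat.fib n ∧
      (hessenbergPerms ({0} : Set (Fin (n + 1)))).ncard = Nat.fib (n + 1) := by
  induction n with
  | zero =>
    have isHessenberg (ρ : Perm (Fin 1)) : IsHessenberg ρ := fun i => by omega
    have zero_mem_fixedPoints (ρ : Perm (Fin 1)) : 0 ∈ fixedPoints ρ := Subsingleton.elim _ _
    have hempty : hessenbergPerms (∅ : Set (Fin 1)) = ∅ :=
      Set.eq_empty_of_forall_notMem fun ρ hρ => hρ.2 (zero_mem_fixedPoints ρ)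
    have hzero : hessenbergPerms ({0} : Set (Fin 1)) = Set.univ :=
      Set.eq_univ_of_forall fun ρ => ⟨isHessenberg ρ, fun i _ => Subsingleton.elim i 0⟩
    simp [hempty, hzero]
  | succ n ih =>
    obtain ⟨ih_empty, ih_zero⟩ := ih
    constructor
    · simpa [ncard_hessenbergPerms_of_zero_notMem] using ih_zero
    · rw [ncard_hessenbergPerms_of_zero_mem (Set.mem_singleton 0), fin_succ_preimage_singleton_zero,
        insert_empty_eq, ih_empty, ih_zero, Nat.fib_add_two]

theorem mem_molsA_add_two {ρ : Perm (Fin (n + 2))} :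
    ρ ∈ molsA (n + 2) ↔ ρ 0 = 0 ∧ ρ ∈ hessenbergPerms {0} := by
  simp only [molsA, Finset.mem_filter, Finset.mem_univ, true_and]
  constructor
  · rintro ⟨hzero, -, hpos⟩
    have ρ_zero : ρ 0 = 0 := Fin.ext (hzero 0 rfl)
    refine ⟨ρ_zero, fun i => ?_, fun i hfix => ?_⟩
    · obtain rfl | hi := eq_or_ne i 0
      · simp [ρ_zero]
      · exact (hpos i (Fin.one_le_of_ne_zero hi)).2
    · by_contra hi
      exact (hpos i (Nat.one_le_iff_ne_zero.2 (Fin.val_ne_zero_iff.2 hi))).1 (congrArg Fin.val hfix)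
  · rintro ⟨ρ_zero, hhess, hfix⟩
    have val_ne_self (i : Fin (n + 2)) (hi : 1 ≤ (i : ℕ)) : (ρ i : ℕ) ≠ i := fun h => by
      have : i = 0 := hfix (Fin.ext h)
      simp [this] at hi
    refine ⟨fun i hi => ?_, fun i hi => ?_, fun i hi => ⟨val_ne_self i hi, hhess i⟩⟩
    · rw [show i = 0 from Fin.ext hi, ρ_zero, Fin.val_zero]
    · have val_ne_zero : (ρ i : ℕ) ≠ 0 := fun h => by
        have : i = 0 := ρ.injective ((Fin.ext h).trans ρ_zero.symm)
        simp [this] at hi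
      have := val_ne_self i hi.ge
      have := hhess i
      omega

theorem decomposeFin_symm_mem_molsA {p : Fin (n + 2)} {e : Perm (Fin (n + 1))} :
    Perm.decomposeFin.symm (p, e) ∈ molsA (n + 2) ↔ p = 0 ∧ e ∈ hessenbergPerms ∅ := by
  rw [mem_molsA_add_two, Perm.decomposeFin_symm_apply_zero]
  refine and_congr_right fun hp => ?_
  simp [hp, decomposeFin_symm_zero_mem_hessenbergPerms, fin_succ_preimage_singleton_zero]

theorem molsa_add_two (n : ℕ) :
    molsa (n + 2) = (hessenbergPerms (∅ : Set (Fin (n + 1)))).ncard := by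
  rw [molsa, ← Set.ncard_coe_finset, ncard_eq_sum_ncard_decomposeFin_symm]
  simp [Fin.sum_univ_succ, decomposeFin_symm_mem_molsA]

/-- For every `n ≥ 3`, `a(n) = F(n−2)`, the `(n−2)`nd Fibonacci number
(with `F(1) = F(2) = 1`). -/
theorem molsa_eq_fib : ∀ n : ℕ, 3 ≤ n → molsa n = Nat.fib (n - 2) := by
  intro n hn
  obtain ⟨m, rfl⟩ := Nat.exists_eq_add_of_le' (Nat.le_of_succ_le hn)
  rw [molsa_add_two, (ncard_hessenbergPerms_eq_fib m).1, Nat.add_sub_cancel]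
end

section
/- For every integer n ≥ 5, a(n) = a(n−1) + a(n−2), where a(n) is the number of permutations ρ of {0,1,…,n−1} satisfying ρ(0)=0, ρ(1)=2, ρ(i)≠i and ρ(i)≤i+1 for all 1≤i≤n−1. -/
/-!
For `n ≥ 2` and `ρ ∈ A(n+2)`, only the index `n` can have the value `n + 1`, so `ρ` sends
`n ↦ n + 1 ↦ j` for some `j`. Cutting `n + 1` out of its cycle gives a permutation `τ` of
`{0, …, n}` with `τ(n) = j`, on which the conditions at the indices below `n` survive while those
at `n` and `n + 1` have become void. Either `τ(n) ≠ n`, and then `τ ∈ A(n+1)`, or `τ` fixes `n`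
and restricts to an element of `A(n)`.
-/

open Finset Equiv

section ExtendLast

variable {n : ℕ}

/-- The permutation `permExtendLast τ` of `{0, …, n}` extends the permutation `τ` of
`{0, …, n - 1}` by fixing `n`. -/
def permExtendLast : Perm (Fin n) ↪ Perm (Fin (n + 1)) where
  toFun τ := finSuccEquivLast.symm.permCongr (optionCongr τ)
  inj' := (permCongr _).injective.comp optionCongr_injective

@[simp]
theorem permExtendLast_castSucc (τ : Perm (Fin n)) (i : Fin n) :
    permExtendLast τ i.castSucc = (τ i).castSucc := by
  simp [permExtendLast]

@[simp]
theorem permExtendLast_last (τ : Perm (Fin n)) :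
    permExtendLast τ (Fin.last n) = Fin.last n := by
  simp [permExtendLast]

theorem exists_permExtendLast_eq_iff {σ : Perm (Fin (n + 1))} :
    (∃ τ, permExtendLast τ = σ) ↔ σ (Fin.last n) = Fin.last n := by
  refine ⟨fun ⟨τ, hτ⟩ => hτ ▸ permExtendLast_last τ, fun hσ => ?_⟩
  let σ' : Perm (Option (Fin n)) := finSuccEquivLast.permCongr σ
  have hσ' : σ' none = none := by simp [σ', hσ]
  have hcongr : optionCongr (removeNone σ') = σ' := by
    rw [map_equiv_removeNone, hσ', swap_self]
    rfl
  refine ⟨removeNone σ', ?_⟩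
  ext i
  simp [permExtendLast, hcongr, σ']

end ExtendLast

section SpliceLast

variable {n : ℕ}

/-- The permutation `permSpliceLast τ` of `{0, …, n + 1}` inserts `n + 1` right after `n` in the
cycle of `τ` through `n`: where `τ` sends `n ↦ j`, it sends `n ↦ n + 1 ↦ j`. -/
def permSpliceLast : Perm (Fin (n + 1)) ↪ Perm (Fin (n + 2)) :=
  permExtendLast.trans
    (Equiv.mulRight (swap (Fin.last n).castSucc (Fin.last (n + 1)))).toEmbedding

theorem permSpliceLast_eq_mul_swap (τ : Perm (Fin (n + 1))) :
    permSpliceLast τ = permExtendLast τ * swap (Fin.last n).castSucc (Fin.last (n + 1)) :=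
  rfl

@[simp]
theorem permSpliceLast_castSucc_castSucc (τ : Perm (Fin (n + 1))) (i : Fin n) :
    permSpliceLast τ i.castSucc.castSucc = (τ i.castSucc).castSucc := by
  have hne : i.castSucc.castSucc ≠ (Fin.last n).castSucc := by simp
  rw [permSpliceLast_eq_mul_swap, Perm.mul_apply,
    swap_apply_of_ne_of_ne hne (Fin.castSucc_ne_last _), permExtendLast_castSucc]

@[simp]
theorem permSpliceLast_castSucc_last (τ : Perm (Fin (n + 1))) :
    permSpliceLast τ (Fin.last n).castSucc = Fin.last (n + 1) := by
  simp [permSpliceLast_eq_mul_swap]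

@[simp]
theorem permSpliceLast_last (τ : Perm (Fin (n + 1))) :
    permSpliceLast τ (Fin.last (n + 1)) = (τ (Fin.last n)).castSucc := by
  simp [permSpliceLast_eq_mul_swap]

theorem exists_permSpliceLast_eq_iff {ρ : Perm (Fin (n + 2))} :
    (∃ τ, permSpliceLast τ = ρ) ↔ ρ (Fin.last n).castSucc = Fin.last (n + 1) := by
  simp only [permSpliceLast_eq_mul_swap, ← eq_mul_inv_iff_mul_eq, swap_inv,
    exists_permExtendLast_eq_iff, Perm.mul_apply, swap_apply_right]

end SpliceLast

/-- The condition that membership in `A(n)` imposes on the value `v = ρ(i)` at the single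
index `i`. -/
def MolsaAdmissible (i v : ℕ) : Prop :=
  (i = 0 → v = 0) ∧ (i = 1 → v = 2) ∧ (1 ≤ i → v ≠ i ∧ v ≤ i + 1)

instance : DecidableRel MolsaAdmissible :=
  fun i v => inferInstanceAs (Decidable ((i = 0 → v = 0) ∧ (i = 1 → v = 2) ∧ (1 ≤ i → _ ∧ _)))

theorem molsaAdmissible_iff_of_two_le {i v : ℕ} (hi : 2 ≤ i) :
    MolsaAdmissible i v ↔ v ≠ i ∧ v ≤ i + 1 := by
  unfold MolsaAdmissible
  omega

theorem MolsaAdmissible.le_max {i v : ℕ} (h : MolsaAdmissible i v) : v ≤ max 2 (i + 1) := by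
  unfold MolsaAdmissible at h
  omega

section Counting

variable {n : ℕ}

theorem mem_molsA {ρ : Perm (Fin n)} : ρ ∈ molsA n ↔ ∀ i : Fin n, MolsaAdmissible i (ρ i) := by
  simp only [molsA, mem_filter, mem_univ, true_and, MolsaAdmissible, forall_and]

/-- The permutations of `{0, …, n}` that satisfy the conditions defining `A(n+1)` at every index
except possibly the last one, `n`. -/
def molsAInit (n : ℕ) : Finset (Perm (Fin (n + 1))) :=
  {τ | ∀ i : Fin n, MolsaAdmissible i (τ i.castSucc)}

theorem mem_molsAInit {τ : Perm (Fin (n + 1))} :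
    τ ∈ molsAInit n ↔ ∀ i : Fin n, MolsaAdmissible i (τ i.castSucc) := by
  simp [molsAInit]

theorem mem_molsA_succ {τ : Perm (Fin (n + 1))} :
    τ ∈ molsA (n + 1) ↔ τ ∈ molsAInit n ∧ MolsaAdmissible n (τ (Fin.last n)) := by
  simp only [mem_molsA, mem_molsAInit, Fin.forall_fin_succ', Fin.val_castSucc, Fin.val_last]

theorem permExtendLast_mem_molsAInit {τ : Perm (Fin n)} :
    permExtendLast τ ∈ molsAInit n ↔ τ ∈ molsA n := by
  simp only [mem_molsAInit, mem_molsA, permExtendLast_castSucc, Fin.val_castSucc]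

theorem filter_molsAInit_fixes_last :
    {τ ∈ molsAInit n | τ (Fin.last n) = Fin.last n} = (molsA n).map permExtendLast := by
  ext τ
  simp only [mem_filter, mem_map]
  constructor
  · rintro ⟨hτ, hfix⟩
    obtain ⟨υ, rfl⟩ := exists_permExtendLast_eq_iff.2 hfix
    exact ⟨υ, permExtendLast_mem_molsAInit.1 hτ, rfl⟩
  · rintro ⟨υ, hυ, rfl⟩
    exact ⟨permExtendLast_mem_molsAInit.2 hυ, permExtendLast_last υ⟩

theorem filter_molsAInit_moves_last (hn : 2 ≤ n) :
    {τ ∈ molsAInit n | ¬τ (Fin.last n) = Fin.last n} = molsA (n + 1) := by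
  ext τ
  have hle : (τ (Fin.last n) : ℕ) ≤ n + 1 := (τ (Fin.last n)).isLt.le
  simp only [mem_filter, mem_molsA_succ, molsaAdmissible_iff_of_two_le hn, hle, and_true,
    Fin.ext_iff, Fin.val_last, ne_eq]

theorem card_molsAInit (hn : 2 ≤ n) : #(molsAInit n) = molsa (n + 1) + molsa n := by
  rw [← card_filter_add_card_filter_not fun τ => τ (Fin.last n) = Fin.last n,
    filter_molsAInit_fixes_last, filter_molsAInit_moves_last hn, card_map, add_comm]
  rfl

theorem permSpliceLast_mem_molsA (hn : 2 ≤ n) {τ : Perm (Fin (n + 1))} :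
    permSpliceLast τ ∈ molsA (n + 2) ↔ τ ∈ molsAInit n := by
  have hprev : MolsaAdmissible n (n + 1) := (molsaAdmissible_iff_of_two_le hn).2 (by omega)
  have hlast : MolsaAdmissible (n + 1) (τ (Fin.last n)) :=
    (molsaAdmissible_iff_of_two_le (by omega)).2 (by omega)
  simp only [mem_molsA_succ, mem_molsAInit, Fin.forall_fin_succ', Fin.val_castSucc, Fin.val_last,
    permSpliceLast_castSucc_castSucc, permSpliceLast_castSucc_last, permSpliceLast_last,
    hprev, hlast, and_true]

theorem apply_castSucc_last_of_mem_molsA (hn : 2 ≤ n) {ρ : Perm (Fin (n + 2))}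
    (hρ : ρ ∈ molsA (n + 2)) : ρ (Fin.last n).castSucc = Fin.last (n + 1) := by
  obtain ⟨i, hi⟩ := ρ.surjective (Fin.last (n + 1))
  have hadm : MolsaAdmissible i (n + 1) := by simpa [hi] using mem_molsA.1 hρ i
  have hge : n ≤ i := by have := hadm.le_max; omega
  have hne : n + 1 ≠ i := ((molsaAdmissible_iff_of_two_le (hn.trans hge)).1 hadm).1
  have hival : i = (Fin.last n).castSucc := Fin.ext <| by
    simp only [Fin.val_castSucc, Fin.val_last]
    omega
  rw [← hival, hi]

theorem molsA_add_two_eq_map (hn : 2 ≤ n) :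
    molsA (n + 2) = (molsAInit n).map permSpliceLast := by
  ext ρ
  rw [mem_map]
  constructor
  · intro hρ
    obtain ⟨τ, rfl⟩ := exists_permSpliceLast_eq_iff.2 (apply_castSucc_last_of_mem_molsA hn hρ)
    exact ⟨τ, (permSpliceLast_mem_molsA hn).1 hρ, rfl⟩
  · rintro ⟨τ, hτ, rfl⟩
    exact (permSpliceLast_mem_molsA hn).2 hτ

theorem molsa_add_two_s1 (hn : 2 ≤ n) : molsa (n + 2) = molsa (n + 1) + molsa n := by
  rw [molsa, molsA_add_two_eq_map hn, card_map, card_molsAInit hn]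

end Counting

/-- For every `n ≥ 5`, `a(n) = a(n−1) + a(n−2)`. -/
theorem molsa_recurrence : ∀ n : ℕ, 5 ≤ n → molsa n = molsa (n - 1) + molsa (n - 2) := by
  intro n hn
  obtain ⟨m, rfl⟩ := Nat.exists_eq_add_of_le' (show 2 ≤ n by omega)
  exact molsa_add_two_s1 (by omega)
end

section
/- Let n ≥ 5 and let ρ ∈ A(n) satisfy ρ(n−1) ≠ n−2. Then ρ(n−3) = n−2, and the permutation ρ' of {0,1,…,n−2} obtained from ρ by deleting the symbol n−1 from its one-line (list) representation lies in A(n−1). -/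
section Deletion

theorem erase_ofFn_of_injective {α : Type*} [DecidableEq α] {n : ℕ} {f : Fin (n + 1) → α}
    (hf : f.Injective) (p : Fin (n + 1)) :
    (List.ofFn f).erase (f p) = List.ofFn (p.removeNth f) := by
  have hp : (p : ℕ) < (List.ofFn f).length := p.isLt.trans_eq List.length_ofFn.symm
  have erase_eq : (List.ofFn f).erase (f p) = (List.ofFn f).eraseIdx p := by
    simpa only [List.getElem_ofFn] using (List.nodup_ofFn.2 hf).erase_getElem p hp
  rw [erase_eq]
  have length_eq : ((List.ofFn f).eraseIdx p).length = (List.ofFn (p.removeNth f)).length := by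
    rw [List.length_eraseIdx_of_lt hp, List.length_ofFn, List.length_ofFn, Nat.add_sub_cancel]
  refine List.ext_getElem length_eq fun i _ _ => ?_
  simp only [List.getElem_eraseIdx, List.getElem_ofFn, Fin.removeNth_apply, Fin.succAbove,
    Fin.lt_def]
  split_ifs <;> simp_all

variable {n : ℕ}

/-- The permutation whose one-line representation is that of `ρ` with the largest symbol deleted.
It is `ρ` restricted to the positions of the other symbols, these positions being renumbered in
increasing order. -/
def deleteLast (ρ : Equiv.Perm (Fin (n + 1))) : Equiv.Perm (Fin n) :=
  (finSuccAboveEquiv (ρ.symm (Fin.last n))).trans <|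
    (ρ.subtypeEquiv fun _ => not_congr ρ.eq_symm_apply).trans (finSuccAboveEquiv (Fin.last n)).symm

theorem deleteLast_apply_val (ρ : Equiv.Perm (Fin (n + 1))) (i : Fin n) :
    (deleteLast ρ i : ℕ) = ρ ((ρ.symm (Fin.last n)).succAbove i) := by
  simp [deleteLast, finSuccAboveEquiv_apply, finSuccAboveEquiv_symm_apply_last]

theorem erase_ofFn_eq_ofFn_deleteLast (ρ : Equiv.Perm (Fin (n + 1))) :
    (List.ofFn fun i => (ρ i : ℕ)).erase n = List.ofFn fun i => (deleteLast ρ i : ℕ) := by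
  have val_injective : (fun i => (ρ i : ℕ)).Injective := Fin.val_injective.comp ρ.injective
  have erase_last := erase_ofFn_of_injective val_injective (ρ.symm (Fin.last n))
  rw [ρ.apply_symm_apply, Fin.val_last] at erase_last
  rw [erase_last]
  exact congrArg List.ofFn (funext fun i => (deleteLast_apply_val ρ i).symm)

end Deletion

namespace molsA

variable {n : ℕ}

theorem mem_iff {ρ : Equiv.Perm (Fin n)} :
    ρ ∈ molsA n ↔
      (∀ i : Fin n, (i : ℕ) = 0 → (ρ i : ℕ) = 0) ∧
      (∀ i : Fin n, (i : ℕ) = 1 → (ρ i : ℕ) = 2) ∧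
      (∀ i : Fin n, 1 ≤ (i : ℕ) → (ρ i : ℕ) ≠ i ∧ (ρ i : ℕ) ≤ i + 1) := by
  simp only [molsA, Finset.mem_filter, Finset.mem_univ, true_and]

theorem apply_eq_succ_or_lt {ρ : Equiv.Perm (Fin n)} (hρ : ρ ∈ molsA n) {i : Fin n}
    (hi : (ρ i : ℕ) ≠ 0) : (ρ i : ℕ) = i + 1 ∨ (ρ i : ℕ) < i := by
  obtain ⟨h_zero, -, h_bound⟩ := mem_iff.1 hρ
  have i_pos : 1 ≤ (i : ℕ) := Nat.one_le_iff_ne_zero.2 (mt (h_zero i) hi)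
  have := h_bound i i_pos
  omega

theorem symm_last {ρ : Equiv.Perm (Fin (n + 2))} (hρ : ρ ∈ molsA (n + 2)) :
    ρ.symm (Fin.last (n + 1)) = (Fin.last n).castSucc := by
  have position := apply_eq_succ_or_lt hρ (i := ρ.symm (Fin.last (n + 1))) (by simp)
  rw [ρ.apply_symm_apply, Fin.val_last] at position
  ext
  simp only [Fin.val_castSucc, Fin.val_last]
  omega

theorem apply_eq_succ_of_apply_last_ne {ρ : Equiv.Perm (Fin (n + 3))} (hρ : ρ ∈ molsA (n + 3))
    (h_last : (ρ (Fin.last (n + 2)) : ℕ) ≠ n + 1) :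
    (ρ ⟨n, by omega⟩ : ℕ) = n + 1 := by
  obtain ⟨i, hi⟩ := ρ.surjective ⟨n + 1, by omega⟩
  have hi_val : (ρ i : ℕ) = n + 1 := congrArg Fin.val hi
  have i_ne_last : (i : ℕ) ≠ n + 2 := by
    intro h
    have i_eq_last : i = Fin.last (n + 2) := Fin.ext h
    exact h_last (i_eq_last ▸ hi_val)
  have position := apply_eq_succ_or_lt hρ (i := i) (by omega)
  have i_eq : i = ⟨n, by omega⟩ := Fin.ext (by dsimp only; omega)
  rwa [i_eq] at hi_val

theorem deleteLast_castSucc {ρ : Equiv.Perm (Fin (n + 2))} (hρ : ρ ∈ molsA (n + 2)) (i : Fin n) :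
    (deleteLast ρ i.castSucc : ℕ) = ρ i.castSucc.castSucc := by
  rw [deleteLast_apply_val, symm_last hρ, Fin.succAbove_castSucc_of_lt _ _ i.castSucc_lt_last]

theorem deleteLast_last {ρ : Equiv.Perm (Fin (n + 2))} (hρ : ρ ∈ molsA (n + 2)) :
    (deleteLast ρ (Fin.last n) : ℕ) = ρ (Fin.last (n + 1)) := by
  rw [deleteLast_apply_val, symm_last hρ, Fin.succAbove_castSucc_self, Fin.succ_last]

theorem deleteLast_mem {ρ : Equiv.Perm (Fin (n + 3))} (hρ : ρ ∈ molsA (n + 3))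
    (h_last : (ρ (Fin.last (n + 2)) : ℕ) ≠ n + 1) :
    deleteLast ρ ∈ molsA (n + 2) := by
  obtain ⟨h_zero, h_one, h_bound⟩ := mem_iff.1 hρ
  have n_ne_zero : n ≠ 0 := by
    intro hn
    have := apply_eq_succ_of_apply_last_ne hρ h_last
    have := h_zero ⟨n, by omega⟩ hn
    omega
  refine mem_iff.2 ⟨fun i => ?_, fun i => ?_, fun i => ?_⟩ <;> cases i using Fin.lastCases
  case refine_1.last => simp
  case refine_2.last => simp [n_ne_zero]
  case refine_3.last => exact fun _ => ⟨deleteLast_last hρ ▸ h_last, (deleteLast ρ _).isLt.le⟩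
  case refine_1.cast j =>
    simpa only [deleteLast_castSucc hρ, Fin.val_castSucc] using
      h_zero j.castSucc.castSucc
  case refine_2.cast j =>
    simpa only [deleteLast_castSucc hρ, Fin.val_castSucc] using
      h_one j.castSucc.castSucc
  case refine_3.cast j =>
    simpa only [deleteLast_castSucc hρ, Fin.val_castSucc] using
      h_bound j.castSucc.castSucc

end molsA

/-- If `n ≥ 5` and `ρ ∈ A(n)` satisfies `ρ(n−1) ≠ n−2`, then `ρ(n−3) = n−2`, and the
permutation `ρ'` of `{0,1,…,n−2}` obtained from `ρ` by deleting the symbol `n−1` from its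
one-line (list) representation lies in `A(n−1)`. -/
theorem molsA_delete (n : ℕ) (hn : 5 ≤ n) (ρ : Equiv.Perm (Fin n)) (hρ : ρ ∈ molsA n)
    (h : (ρ ⟨n - 1, by omega⟩ : ℕ) ≠ n - 2) :
    (ρ ⟨n - 3, by omega⟩ : ℕ) = n - 2 ∧
    ∃ ρ' ∈ molsA (n - 1),
      (List.ofFn fun i : Fin n => (ρ i : ℕ)).erase (n - 1)
        = List.ofFn fun i : Fin (n - 1) => (ρ' i : ℕ) := by
  obtain ⟨m, rfl⟩ : ∃ m, n = m + 3 := ⟨n - 3, by omega⟩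
  exact ⟨molsA.apply_eq_succ_of_apply_last_ne hρ h, deleteLast ρ, molsA.deleteLast_mem hρ h,
    erase_ofFn_eq_ofFn_deleteLast ρ⟩
end

section
/- For n ≥ 5, the map sending ρ' ∈ A(n−2) to the permutation ρ of {0,1,…,n−1} defined by ρ(i)=ρ'(i) for 0≤i≤n−3, ρ(n−2)=n−1, and ρ(n−1)=n−2 is a well-defined injection from A(n−2) into A(n), and every permutation ρ in its image satisfies ρ(n−1)=n−2. Moreover its image is disjoint from the image of the injection A(n−1) → A(n) that inserts the symbol n−1 in the second-last position. -/
/-!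
Let `insertPenultimate` be the insertion `Perm (Fin (m + 1)) → Perm (Fin (m + 2))` of the new symbol
`m + 1` in the second-last position. The map of the theorem, with `n = m + 2`, factors through it:
extend `ρ'` to `{0, …, m}` by the fixed point `m`, then insert `m + 1`. The value of a permutation
`σ` at `m` is moved to the position `m + 1`, which exceeds it, so membership of
`insertPenultimate σ` in `A(m + 2)` constrains `σ` only at positions below `m`. Hence the
composite lands in `A(m + 2)`, although the intermediate permutation, having the fixed point `m`, is
not in `A(m + 1)`. As the insertion is injective, this fixed point separates the two images.
-/

/-- The extension of a permutation of `{0, …, n - 1}` to `{0, …, n}` by the fixed point `n`. -/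
def extendLast {n : ℕ} (σ : Equiv.Perm (Fin n)) : Equiv.Perm (Fin (n + 1)) :=
  finSuccEquivLast.symm.permCongr σ.optionCongr

/-- The insertion of the new symbol `n + 1` in the second-last position of the word
`σ(0) σ(1) … σ(n)`. Precomposing with the swap moves the symbol from the last position, where
`extendLast` puts it. -/
def insertPenultimate {n : ℕ} (σ : Equiv.Perm (Fin (n + 1))) : Equiv.Perm (Fin (n + 2)) :=
  extendLast σ * Equiv.swap (Fin.last n).castSucc (Fin.last (n + 1))

/-- The map `A(n) → A(n + 2)` of the theorem: the word `σ(0) … σ(n - 1)` is continued by the new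
symbols `n + 1`, `n` in this order. -/
def appendSwap {n : ℕ} (σ : Equiv.Perm (Fin n)) : Equiv.Perm (Fin (n + 2)) :=
  insertPenultimate (extendLast σ)

/-- The condition that membership in `A(n)` imposes on the value `v` of a permutation at `i`. -/
def IsMolsAEntry (i v : ℕ) : Prop :=
  (i = 0 → v = 0) ∧ (i = 1 → v = 2) ∧ (1 ≤ i → v ≠ i ∧ v ≤ i + 1)

section Extension

variable {n : ℕ}

@[simp]
lemma extendLast_castSucc (σ : Equiv.Perm (Fin n)) (i : Fin n) :
    extendLast σ i.castSucc = (σ i).castSucc := by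
  simp [extendLast, Equiv.permCongr_apply]

@[simp]
lemma extendLast_last (σ : Equiv.Perm (Fin n)) : extendLast σ (Fin.last n) = Fin.last n := by
  simp [extendLast, Equiv.permCongr_apply]

lemma extendLast_injective : Function.Injective (extendLast (n := n)) :=
  finSuccEquivLast.symm.permCongr.injective.comp Equiv.optionCongr_injective

lemma insertPenultimate_injective : Function.Injective (insertPenultimate (n := n)) :=
  (mul_left_injective _).comp extendLast_injective

lemma insertPenultimate_castSucc_of_ne_last (σ : Equiv.Perm (Fin (n + 1))) {i : Fin (n + 1)}
    (hi : i ≠ Fin.last n) : insertPenultimate σ i.castSucc = (σ i).castSucc := by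
  rw [insertPenultimate, Equiv.Perm.mul_apply, Equiv.swap_apply_of_ne_of_ne
    ((Fin.castSucc_injective _).ne hi) (Fin.castSucc_ne_last i), extendLast_castSucc]

@[simp]
lemma insertPenultimate_castSucc_last (σ : Equiv.Perm (Fin (n + 1))) :
    insertPenultimate σ (Fin.last n).castSucc = Fin.last (n + 1) := by
  simp [insertPenultimate]

@[simp]
lemma insertPenultimate_last (σ : Equiv.Perm (Fin (n + 1))) :
    insertPenultimate σ (Fin.last (n + 1)) = (σ (Fin.last n)).castSucc := by
  simp [insertPenultimate]

@[simp]
lemma insertPenultimate_castSucc_castSucc (σ : Equiv.Perm (Fin (n + 1))) (i : Fin n) :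
    insertPenultimate σ i.castSucc.castSucc = (σ i.castSucc).castSucc :=
  insertPenultimate_castSucc_of_ne_last σ (Fin.castSucc_ne_last i)

lemma appendSwap_injective : Function.Injective (appendSwap (n := n)) :=
  insertPenultimate_injective.comp extendLast_injective

lemma appendSwap_castSucc_castSucc (σ : Equiv.Perm (Fin n)) (i : Fin n) :
    appendSwap σ i.castSucc.castSucc = (σ i).castSucc.castSucc := by
  simp [appendSwap]

lemma appendSwap_castSucc_last (σ : Equiv.Perm (Fin n)) :
    appendSwap σ (Fin.last n).castSucc = Fin.last (n + 1) :=
  insertPenultimate_castSucc_last _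

lemma appendSwap_last (σ : Equiv.Perm (Fin n)) :
    appendSwap σ (Fin.last (n + 1)) = (Fin.last n).castSucc := by
  simp [appendSwap]

end Extension

lemma mem_molsA_iff {n : ℕ} {ρ : Equiv.Perm (Fin n)} :
    ρ ∈ molsA n ↔ ∀ i : Fin n, IsMolsAEntry i (ρ i) := by
  simp only [molsA, IsMolsAEntry, Finset.mem_filter, Finset.mem_univ, true_and, forall_and]

section Membership

variable {m : ℕ}

lemma apply_last_ne_last_of_mem_molsA (hm : m ≠ 0) {σ : Equiv.Perm (Fin (m + 1))}
    (hσ : σ ∈ molsA (m + 1)) : σ (Fin.last m) ≠ Fin.last m := fun hfix =>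
  ((mem_molsA_iff.1 hσ (Fin.last m)).2.2 (Nat.one_le_iff_ne_zero.2 hm)).1 (congrArg Fin.val hfix)

lemma isMolsAEntry_self_add_one (hm : m ≠ 0) : IsMolsAEntry m (m + 1) := by
  unfold IsMolsAEntry
  omega

lemma isMolsAEntry_of_lt {i v : ℕ} (hi : 2 ≤ i) (hv : v < i) : IsMolsAEntry i v := by
  unfold IsMolsAEntry
  omega

lemma insertPenultimate_mem_molsA_iff (hm : m ≠ 0) {σ : Equiv.Perm (Fin (m + 1))} :
    insertPenultimate σ ∈ molsA (m + 2) ↔ ∀ i : Fin m, IsMolsAEntry i (σ i.castSucc) := by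
  have penultimate : IsMolsAEntry m (m + 1) := isMolsAEntry_self_add_one hm
  have last : IsMolsAEntry (m + 1) (σ (Fin.last m)) := isMolsAEntry_of_lt (by omega) (σ _).isLt
  simp [mem_molsA_iff, Fin.forall_fin_succ', penultimate, last]

lemma insertPenultimate_mem_molsA (hm : m ≠ 0) {σ : Equiv.Perm (Fin (m + 1))}
    (hσ : σ ∈ molsA (m + 1)) : insertPenultimate σ ∈ molsA (m + 2) :=
  (insertPenultimate_mem_molsA_iff hm).2 fun i => mem_molsA_iff.1 hσ i.castSucc

lemma appendSwap_mem_molsA_iff (hm : m ≠ 0) {ρ : Equiv.Perm (Fin m)} :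
    appendSwap ρ ∈ molsA (m + 2) ↔ ρ ∈ molsA m := by
  simp [appendSwap, insertPenultimate_mem_molsA_iff hm, mem_molsA_iff]

lemma appendSwap_ne_insertPenultimate (hm : m ≠ 0) (ρ : Equiv.Perm (Fin m))
    {σ : Equiv.Perm (Fin (m + 1))} (hσ : σ ∈ molsA (m + 1)) :
    appendSwap ρ ≠ insertPenultimate σ := by
  intro heq
  have hρσ : extendLast ρ = σ := insertPenultimate_injective heq
  exact apply_last_ne_last_of_mem_molsA hm hσ (hρσ ▸ extendLast_last ρ)

end Membership

/-- For `n ≥ 5`, the map sending `ρ' ∈ A(n−2)` to the permutation `ρ` of `{0,1,…,n−1}`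
defined by `ρ(i) = ρ'(i)` for `0 ≤ i ≤ n−3`, `ρ(n−2) = n−1` and `ρ(n−1) = n−2` is a
well-defined injection from `A(n−2)` into `A(n)`, every permutation `ρ` in its image
satisfies `ρ(n−1) = n−2`, and its image is disjoint from the image of the injection
`A(n−1) → A(n)` that inserts the symbol `n−1` in the second-last position
(i.e. `ρ'` maps to `ρ` with `ρ(i) = ρ'(i)` for `0 ≤ i ≤ n−3`, `ρ(n−2) = n−1`,
`ρ(n−1) = ρ'(n−2)`). -/
theorem molsA_append (n : ℕ) (hn : 5 ≤ n) :
    ∃ g : Equiv.Perm (Fin (n - 2)) → Equiv.Perm (Fin n),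
    ∃ f : Equiv.Perm (Fin (n - 1)) → Equiv.Perm (Fin n),
      (∀ ρ' ∈ molsA (n - 2), g ρ' ∈ molsA n) ∧
      Set.InjOn g (molsA (n - 2)) ∧
      (∀ ρ' ∈ molsA (n - 2),
        (∀ i : Fin (n - 2), ((g ρ') (Fin.castLE (by omega) i) : ℕ) = (ρ' i : ℕ)) ∧
        ((g ρ') ⟨n - 2, by omega⟩ : ℕ) = n - 1 ∧
        ((g ρ') ⟨n - 1, by omega⟩ : ℕ) = n - 2) ∧
      (∀ ρ' ∈ molsA (n - 1),
        (∀ i : Fin (n - 1), (i : ℕ) ≤ n - 3 →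
          ((f ρ') (Fin.castLE (by omega) i) : ℕ) = (ρ' i : ℕ)) ∧
        ((f ρ') ⟨n - 2, by omega⟩ : ℕ) = n - 1 ∧
        ((f ρ') ⟨n - 1, by omega⟩ : ℕ) = (ρ' ⟨n - 2, by omega⟩ : ℕ)) ∧
      (∀ ρ' ∈ molsA (n - 1), f ρ' ∈ molsA n) ∧
      (∀ ρ' ∈ molsA (n - 2), ∀ σ' ∈ molsA (n - 1), g ρ' ≠ f σ') := by
  obtain ⟨m, rfl⟩ : ∃ m, n = m + 2 := ⟨n - 2, by omega⟩
  have hm : m ≠ 0 := by omega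
  refine ⟨appendSwap (n := m), insertPenultimate (n := m),
    fun ρ hρ => (appendSwap_mem_molsA_iff hm).2 hρ,
    appendSwap_injective.injOn,
    fun ρ _ => ⟨fun i => congrArg Fin.val (appendSwap_castSucc_castSucc ρ i),
      congrArg Fin.val (appendSwap_castSucc_last ρ),
      congrArg Fin.val (appendSwap_last ρ)⟩,
    fun σ _ => ⟨fun i hi => ?_,
      congrArg Fin.val (insertPenultimate_castSucc_last σ),
      congrArg Fin.val (insertPenultimate_last σ)⟩,
    fun σ hσ => insertPenultimate_mem_molsA hm hσ,
    fun ρ _ σ hσ => appendSwap_ne_insertPenultimate hm ρ hσ⟩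
  have hi_ne_last : i ≠ Fin.last m := Fin.ne_of_val_ne (by simp only [Fin.val_last]; omega)
  exact congrArg Fin.val (insertPenultimate_castSucc_of_ne_last σ hi_ne_last)
end
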